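/- Let n ∈ ℕ, let q be a complex number with q^j ≠ 1 for all 1 ≤ j ≤ n, let x be a complex number with (xq;q)_j ≠ 0 for all 0 ≤ j ≤ 2n, and let a₀, a₁, …, a_n be arbitrary complex numbers (with q ≠ 0). Then Σ_{k=0}^n a_k·x^k / ((q;q)_{n−k}·(xq;q)_{n+k}) = Σ_{j=0}^n (q^{j²}·x^j/(q;q)_{n−j}) · Σ_{k=0}^j a_k·q^{−k²} / ((q;q)_{j−k}·(xq;q)_{j+k}). -/

import Mathlib

/-- The finite q-Pochhammer symbol `(x;q)_n = ∏_{i=1}^n (1 - x q^{i-1})`. -/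
noncomputable def qPoch (q x : ℂ) (n : ℕ) : ℂ := ∏ i ∈ Finset.range n, (1 - x * q ^ i)

/-!
With `α_k = a_k q^{-k²}`, the identity expresses the Bailey transform of `q^{k²} x^k α_k` through
that of `α_k`. After interchanging the two summations, comparing the coefficients of `α_k` leaves
`∑ᵢ [m, i] q^{i²} yⁱ (y q^{i+1}; q)_{m-i} = 1`, a limiting case of the `q`-Chu–Vandermonde sum,
at `m = n - k` and `y = x q^{2k}`. The sum at `(m + 1, y)` equals the sum at `(m, y q)`: after
inserting the `q`-Pascal rule and splitting the first factor off the Pochhammer symbol, two of the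
three resulting sums cancel.
-/

open Finset

section QBinomial

variable {R : Type*} [CommSemiring R]

/-- The Gaussian binomial coefficient `[n, k]_q`, defined by the `q`-Pascal rule so that it makes
sense for every `q`, roots of unity included. -/
def qBinom (q : R) : ℕ → ℕ → R
  | _, 0 => 1
  | 0, _ + 1 => 0
  | n + 1, k + 1 => q ^ (k + 1) * qBinom q n (k + 1) + qBinom q n k

theorem qBinom_zero_right (q : R) (n : ℕ) : qBinom q n 0 = 1 := by
  cases n <;> rfl

theorem qBinom_succ_succ (q : R) (n k : ℕ) :
    qBinom q (n + 1) (k + 1) = q ^ (k + 1) * qBinom q n (k + 1) + qBinom q n k :=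
  rfl

theorem qBinom_eq_zero_of_lt (q : R) : ∀ {n k : ℕ}, n < k → qBinom q n k = 0
  | 0, _ + 1, _ => rfl
  | n + 1, k + 1, hnk => by
    rw [qBinom_succ_succ, qBinom_eq_zero_of_lt q (Nat.lt_of_succ_lt hnk),
      qBinom_eq_zero_of_lt q (Nat.lt_of_succ_lt_succ hnk), mul_zero, add_zero]

theorem qBinom_self (q : R) (n : ℕ) : qBinom q n n = 1 := by
  induction n with
  | zero => rfl
  | succ n ih =>
    rw [qBinom_succ_succ, qBinom_eq_zero_of_lt q n.lt_succ_self, ih, mul_zero, zero_add]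

theorem sum_qBinom_succ_mul (q : R) (n : ℕ) (f : ℕ → R) :
    ∑ k ∈ range (n + 2), qBinom q (n + 1) k * f k =
      ∑ k ∈ range (n + 1), qBinom q n k * (q ^ k * f k + f (k + 1)) := by
  have shifted_sum : ∑ k ∈ range (n + 1), q ^ (k + 1) * qBinom q n (k + 1) * f (k + 1) + f 0 =
      ∑ k ∈ range (n + 1), q ^ k * qBinom q n k * f k := by
    have peel_zero := sum_range_succ' (fun k ↦ q ^ k * qBinom q n k * f k) (n + 1)
    rw [sum_range_succ, qBinom_eq_zero_of_lt q n.lt_succ_self] at peel_zero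
    simpa only [mul_zero, zero_mul, add_zero, pow_zero, qBinom_zero_right, one_mul]
      using peel_zero.symm
  calc ∑ k ∈ range (n + 2), qBinom q (n + 1) k * f k
      = (∑ k ∈ range (n + 1), q ^ (k + 1) * qBinom q n (k + 1) * f (k + 1) + f 0) +
          ∑ k ∈ range (n + 1), qBinom q n k * f (k + 1) := by
        simp only [sum_range_succ' _ (n + 1), qBinom_zero_right, qBinom_succ_succ, add_mul,
          sum_add_distrib]
        ring
    _ = ∑ k ∈ range (n + 1), qBinom q n k * (q ^ k * f k + f (k + 1)) := by
        rw [shifted_sum, ← sum_add_distrib]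
        exact sum_congr rfl fun k _ ↦ by ring

end QBinomial

section QPochhammer

theorem qPoch_zero (q x : ℂ) : qPoch q x 0 = 1 :=
  prod_range_zero _

theorem qPoch_succ (q x : ℂ) (n : ℕ) : qPoch q x (n + 1) = qPoch q x n * (1 - x * q ^ n) :=
  prod_range_succ _ _

theorem qPoch_add (q x : ℂ) (m n : ℕ) :
    qPoch q x (m + n) = qPoch q x m * qPoch q (x * q ^ m) n := by
  simp only [qPoch, prod_range_add, pow_add, mul_assoc]

theorem qPoch_succ' (q x : ℂ) (n : ℕ) :
    qPoch q x (n + 1) = (1 - x) * qPoch q (x * q) n := by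
  rw [add_comm, qPoch_add, qPoch_succ, qPoch_zero, pow_zero, pow_one, one_mul, mul_one]

theorem qPoch_ne_zero_of_le {q x : ℂ} {m n : ℕ} (hmn : m ≤ n) (hn : qPoch q x n ≠ 0) :
    qPoch q x m ≠ 0 := by
  obtain ⟨r, rfl⟩ := Nat.exists_eq_add_of_le hmn
  rw [qPoch_add] at hn
  exact left_ne_zero_of_mul hn

theorem qPoch_self_ne_zero {q : ℂ} {n : ℕ} (hq : ∀ j : ℕ, 1 ≤ j → j ≤ n → q ^ j ≠ 1) :
    qPoch q q n ≠ 0 := by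
  refine prod_ne_zero_iff.2 fun i hi ↦ ?_
  rw [← pow_succ', sub_ne_zero]
  exact (hq (i + 1) (by lia) (mem_range.1 hi)).symm

theorem qBinom_add_mul_qPoch_mul_qPoch (q : ℂ) (m n : ℕ) :
    qBinom q (m + n) m * (qPoch q q m * qPoch q q n) = qPoch q q (m + n) := by
  induction m generalizing n with
  | zero => rw [qBinom_zero_right, qPoch_zero, zero_add, one_mul, one_mul]
  | succ m ihm =>
    induction n with
    | zero => rw [add_zero, qBinom_self, qPoch_zero, one_mul, mul_one]
    | succ n ihn =>
      have index_eq : m + (n + 1) = m + 1 + n := by ring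
      have ihm_succ := ihm (n + 1)
      rw [index_eq, qPoch_succ q q n] at ihm_succ
      rw [qPoch_succ q q m] at ihn ⊢
      rw [← add_assoc, qBinom_succ_succ, qPoch_succ q q n, qPoch_succ q q (m + 1 + n)]
      linear_combination q ^ (m + 1) * (1 - q * q ^ n) * ihn + (1 - q * q ^ m) * ihm_succ

theorem sum_qBinom_mul_qPoch_eq_one (q y : ℂ) (m : ℕ) :
    ∑ i ∈ range (m + 1),
      qBinom q m i * (q ^ i ^ 2 * y ^ i * qPoch q (y * q * q ^ i) (m - i)) = 1 := by
  induction m generalizing y with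
  | zero => simp [qBinom_zero_right, qPoch_zero]
  | succ m ih =>
    rw [sum_qBinom_succ_mul, ← ih (y * q)]
    refine sum_congr rfl fun i hi ↦ ?_
    have split_first : qPoch q (y * q * q ^ i) (m + 1 - i) =
        (1 - y * q * q ^ i) * qPoch q (y * q * q * q ^ i) (m - i) := by
      rw [Nat.sub_add_comm (mem_range_succ_iff.1 hi), qPoch_succ', mul_right_comm (y * q)]
    have shift_base : y * q * q ^ (i + 1) = y * q * q * q ^ i := by ring
    rw [split_first, Nat.add_sub_add_right, shift_base]
    ring

theorem sum_pow_sq_mul_pow_div_qPoch {q y : ℂ} {m : ℕ} (hq : qPoch q q m ≠ 0)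
    (hy : qPoch q (y * q) m ≠ 0) :
    ∑ i ∈ range (m + 1),
        q ^ i ^ 2 * y ^ i / (qPoch q q (m - i) * qPoch q q i * qPoch q (y * q) i) =
      1 / (qPoch q q m * qPoch q (y * q) m) := by
  rw [← sum_qBinom_mul_qPoch_eq_one q y m, sum_div]
  refine sum_congr rfl fun i hi ↦ ?_
  obtain ⟨r, rfl⟩ := Nat.exists_eq_add_of_le (mem_range_succ_iff.1 hi)
  have hbinom := qBinom_add_mul_qPoch_mul_qPoch q i r
  have hqi := qPoch_ne_zero_of_le (i.le_add_right r) hq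
  have hqr := qPoch_ne_zero_of_le (r.le_add_left i) hq
  have hyi := qPoch_ne_zero_of_le (i.le_add_right r) hy
  rw [add_tsub_cancel_left, div_eq_div_iff (by positivity) (by positivity), ← hbinom, qPoch_add]
  ring

end QPochhammer

section Bailey

/-- The sequence `β` forming a Bailey pair relative to `x` with the sequence `α`, that is,
`β_n = ∑_{k ≤ n} α_k / ((q;q)_{n-k} (xq;q)_{n+k})`. -/
noncomputable def baileyTransform (q x : ℂ) (α : ℕ → ℂ) (n : ℕ) : ℂ :=
  ∑ k ∈ range (n + 1), α k / (qPoch q q (n - k) * qPoch q (x * q) (n + k))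

/- In Bailey's terminology, this is the sequence conjugate to `δ_j = q^{j²} x^j / (q;q)_{n-j}`. -/
theorem sum_Ico_pow_sq_mul_pow_div_qPoch {q x : ℂ} {k n : ℕ} (hkn : k ≤ n)
    (hq : qPoch q q (n - k) ≠ 0) (hx : qPoch q (x * q) (n + k) ≠ 0) :
    ∑ j ∈ Ico k (n + 1),
        q ^ j ^ 2 * x ^ j / qPoch q q (n - j) / (qPoch q q (j - k) * qPoch q (x * q) (j + k)) =
      q ^ k ^ 2 * x ^ k / (qPoch q q (n - k) * qPoch q (x * q) (n + k)) := by
  obtain ⟨m, rfl⟩ := Nat.exists_eq_add_of_le hkn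
  have qPoch_shift (i : ℕ) : qPoch q (x * q) (k + i + k) =
      qPoch q (x * q) (2 * k) * qPoch q (x * q ^ (2 * k) * q) i := by
    rw [show k + i + k = 2 * k + i by ring, qPoch_add, mul_right_comm]
  rw [add_tsub_cancel_left] at hq
  rw [qPoch_shift] at hx
  rw [sum_Ico_eq_sum_range, add_assoc, add_tsub_cancel_left, add_tsub_cancel_left, qPoch_shift]
  calc _ = q ^ k ^ 2 * x ^ k / qPoch q (x * q) (2 * k) *
        ∑ i ∈ range (m + 1), q ^ i ^ 2 * (x * q ^ (2 * k)) ^ i /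
          (qPoch q q (m - i) * qPoch q q i * qPoch q (x * q ^ (2 * k) * q) i) := by
        rw [mul_sum]
        refine sum_congr rfl fun i _ ↦ ?_
        rw [qPoch_shift, Nat.add_sub_add_left, add_tsub_cancel_left, div_div, div_mul_div_comm]
        ring
    _ = _ := by
        rw [sum_pow_sq_mul_pow_div_qPoch hq (right_ne_zero_of_mul hx), div_mul_div_comm]
        ring

theorem baileyTransform_pow_sq_mul_pow_mul {q x : ℂ} {n : ℕ} (hq : qPoch q q n ≠ 0)
    (hx : qPoch q (x * q) (2 * n) ≠ 0) (α : ℕ → ℂ) :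
    baileyTransform q x (fun k ↦ q ^ k ^ 2 * x ^ k * α k) n =
      ∑ j ∈ range (n + 1),
        q ^ j ^ 2 * x ^ j / qPoch q q (n - j) * baileyTransform q x α j := by
  simp only [baileyTransform, mul_sum, range_eq_Ico]
  rw [← sum_Ico_Ico_comm]
  refine sum_congr rfl fun k hk ↦ ?_
  have hkn : k ≤ n := Nat.lt_succ_iff.1 (mem_Ico.1 hk).2
  have hconj := sum_Ico_pow_sq_mul_pow_div_qPoch hkn (qPoch_ne_zero_of_le (n.sub_le k) hq)
    (qPoch_ne_zero_of_le (by lia) hx)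
  rw [mul_div_right_comm, ← hconj, sum_mul]
  exact sum_congr rfl fun j _ ↦ by ring

end Bailey

theorem stmt_13 (n : ℕ) (q x : ℂ) (hq0 : q ≠ 0)
    (hq : ∀ j : ℕ, 1 ≤ j → j ≤ n → q ^ j ≠ 1)
    (hx : ∀ j : ℕ, j ≤ 2 * n → qPoch q (x * q) j ≠ 0)
    (a : ℕ → ℂ) :
    ∑ k ∈ Finset.range (n + 1),
        a k * x ^ k / (qPoch q q (n - k) * qPoch q (x * q) (n + k))
      = ∑ j ∈ Finset.range (n + 1),
          q ^ (j ^ 2) * x ^ j / qPoch q q (n - j) *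
            ∑ k ∈ Finset.range (j + 1),
              a k * q ^ (-((k : ℤ) ^ 2)) / (qPoch q q (j - k) * qPoch q (x * q) (j + k)) := by
  have cancel_pow (k : ℕ) :
      q ^ k ^ 2 * x ^ k * (a k * q ^ (-((k : ℤ) ^ 2))) = a k * x ^ k := by
    have hinv : q ^ k ^ 2 * q ^ (-((k : ℤ) ^ 2)) = 1 := by
      rw [← zpow_natCast, ← zpow_add₀ hq0, Nat.cast_pow, add_neg_cancel, zpow_zero]
    linear_combination a k * x ^ k * hinv
  have bailey := baileyTransform_pow_sq_mul_pow_mul (qPoch_self_ne_zero hq) (hx (2 * n) le_rfl)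
    fun k ↦ a k * q ^ (-((k : ℤ) ^ 2))
  simpa only [cancel_pow, baileyTransform] using bailey
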